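/- (Derivative of expected hire quality) For the trivariate normal model with unit variances and correlations θ^S, θ^H, θ (covariance matrix positive definite), let E(θ) = E[Q | Q^S > τ^S, Q^H > τ^H]. Then ∂E/∂θ = [φ₂(τ^S, τ^H; θ)/Φ̄₂(τ^S, τ^H; θ)]·( E[Q | Q^S = τ^S, Q^H = τ^H] − E[Q | Q^S > τ^S, Q^H > τ^H] ). -/

import Mathlib

/-!
Conditionally on `(Q^S, Q^H) = (s, h)` the quality `Q` is normal with mean
`m(s, h) = ((θS - θ θH) s + (θH - θ θS) h) / (1 - θ²)` (`pdf3_eq`). After Fubini, justified by a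
product Gaussian bound on the density (`pdf3_le`), the denominator of the conditional expectation
is the bivariate survival function `D` and the numerator `N` is the integral of `m · phi2` over the
quadrant. Since `m · phi2 = -(θS ∂ₛ + θH ∂ₕ) phi2`, that integral reduces to boundary terms
(`integral_mul_pdf3`):
`N = θS · φ(τS) Φ̄((τH - θ τS)/√(1-θ²)) + θH · φ(τH) Φ̄((τS - θ τH)/√(1-θ²))`.

Differentiating in `θ` is then explicit (`hasDerivAt_tail`) and gives `N' = phi2(τS, τH) m(τS, τH)`.
Plackett's identity `D' = phi2(τS, τH)` (`hasDerivAt_phiBar2`) follows by differentiating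
`D = ∫ φ(s) Φ̄((τH - θ s)/√(1-θ²)) ds` under the integral, whose derivative is an exact
`s`-derivative. The quotient rule yields `(phi2 / D) (m - N / D)`. The identities for `N` and `D`
hold at all correlations near `θ`, because positivity of the determinant is an open condition.
-/

open Real MeasureTheory Set Matrix

/-- standard normal density -/
noncomputable def phi (x : ℝ) : ℝ := Real.exp (-x^2/2) / Real.sqrt (2*Real.pi)

/-- standard normal CDF -/
noncomputable def Phi (x : ℝ) : ℝ := ∫ t in Set.Iic x, phi t

/-- standard normal survival function -/
noncomputable def PhiBar (x : ℝ) : ℝ := ∫ t in Set.Ioi x, phi t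

/-- standard bivariate normal density with correlation ρ -/
noncomputable def phi2 (x y ρ : ℝ) : ℝ :=
  Real.exp (-(x^2 - 2*ρ*x*y + y^2)/(2*(1-ρ^2))) / (2*Real.pi*Real.sqrt (1-ρ^2))

/-- standard bivariate normal CDF with correlation ρ -/
noncomputable def Phi2 (a b ρ : ℝ) : ℝ := ∫ x in Set.Iic a, ∫ y in Set.Iic b, phi2 x y ρ

/-- standard bivariate normal joint survival function with correlation ρ -/
noncomputable def PhiBar2 (a b ρ : ℝ) : ℝ := ∫ x in Set.Ioi a, ∫ y in Set.Ioi b, phi2 x y ρ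

/-- covariance matrix of (Q, Q^S, Q^H) -/
noncomputable def covM (θS θH θ : ℝ) : Matrix (Fin 3) (Fin 3) ℝ :=
  !![1, θS, θH; θS, 1, θ; θH, θ, 1]

/-- trivariate normal density of (Q, Q^S, Q^H) with zero means, unit variances and
correlations θS = Corr(Q,Q^S), θH = Corr(Q,Q^H), θ = Corr(Q^S,Q^H) -/
noncomputable def pdf3 (θS θH θ : ℝ) (v : Fin 3 → ℝ) : ℝ :=
  Real.exp (-(v ⬝ᵥ ((covM θS θH θ)⁻¹ *ᵥ v))/2) /
    Real.sqrt ((2*Real.pi)^3 * (covM θS θH θ).det)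

open Filter Topology ProbabilityTheory

/-! ### The univariate normal law -/

lemma phi_pos (x : ℝ) : 0 < phi x := by unfold phi; positivity

lemma phi_continuous : Continuous phi := by unfold phi; fun_prop

lemma phi_le_one (x : ℝ) : phi x ≤ 1 := by
  unfold phi
  have h1 : (1:ℝ) ≤ √(2 * π) := by
    rw [Real.one_le_sqrt]; nlinarith [Real.pi_gt_three]
  rw [div_le_one (by positivity)]
  exact le_trans (Real.exp_le_one_iff.2 (by nlinarith [sq_nonneg x])) h1

lemma phi_integrable : Integrable phi := by
  have h := (integrable_exp_neg_mul_sq (b := 1/2) (by norm_num)).div_const (√(2 * π))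
  refine h.congr (Eventually.of_forall fun x => ?_)
  simp only [phi]
  congr 2
  ring

lemma mul_phi_integrable : Integrable (fun x => x * phi x) := by
  have h := (integrable_mul_exp_neg_mul_sq (b := 1/2) (by norm_num)).div_const (√(2 * π))
  refine h.congr (Eventually.of_forall fun x => ?_)
  simp only [phi]
  rw [mul_div_assoc]
  congr 3
  ring

lemma phiBar_eq (x : ℝ) : PhiBar x = PhiBar 0 - ∫ t in (0:ℝ)..x, phi t := by
  have h := intervalIntegral.integral_interval_add_Ioi (a := 0) (b := x) (f := phi)
    phi_integrable.integrableOn phi_integrable.integrableOn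
  unfold PhiBar
  linarith

lemma hasDerivAt_phiBar (x : ℝ) : HasDerivAt PhiBar (-phi x) x := by
  have h : HasDerivAt (fun u => ∫ t in (0:ℝ)..u, phi t) (phi x) x :=
    intervalIntegral.integral_hasDerivAt_right (phi_continuous.intervalIntegrable _ _)
      (phi_continuous.stronglyMeasurableAtFilter _ _) phi_continuous.continuousAt
  rw [funext phiBar_eq]
  exact h.const_sub _

lemma phiBar_continuous : Continuous PhiBar :=
  continuous_iff_continuousAt.2 fun x => (hasDerivAt_phiBar x).continuousAt

lemma phiBar_tendsto : Tendsto PhiBar atTop (𝓝 0) := by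
  have h := intervalIntegral_tendsto_integral_Ioi (0:ℝ) phi_integrable.integrableOn tendsto_id
  have h2 := h.const_sub (PhiBar 0)
  rw [show PhiBar 0 - ∫ x in Ioi (0:ℝ), phi x = 0 by simp [PhiBar]] at h2
  rw [funext phiBar_eq]
  exact h2

lemma phiBar_pos (x : ℝ) : 0 < PhiBar x := by
  unfold PhiBar
  rw [setIntegral_pos_iff_support_of_nonneg_ae
    (Eventually.of_forall fun x => (phi_pos x).le) phi_integrable.integrableOn]
  have : Function.support phi = univ := by
    ext y; simp [(phi_pos y).ne']
  simp [this]

lemma phiBar_le (x : ℝ) : PhiBar x ≤ ∫ t, phi t :=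
  setIntegral_le_integral phi_integrable (Eventually.of_forall fun x => (phi_pos x).le)

/-! ### The bivariate density -/

lemma phi2_symm (x y t : ℝ) : phi2 x y t = phi2 y x t := by
  unfold phi2; congr 3; ring

lemma phi2_pos {t : ℝ} (ht : 0 < 1 - t^2) (x y : ℝ) : 0 < phi2 x y t := by
  unfold phi2; positivity

/-- The joint density is the marginal density of the first coordinate times the conditional
density of the second one. -/
lemma phi2_eq {t : ℝ} (ht : 0 < 1 - t^2) (x y : ℝ) :
    phi2 x y t = phi x * phi ((y - t * x) / √(1 - t^2)) / √(1 - t^2) := by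
  unfold phi2 phi
  have h1 : √(2 * π) * √(2 * π) = 2 * π := Real.mul_self_sqrt (by positivity)
  have h2 : (√(1 - t^2))^2 = 1 - t^2 := Real.sq_sqrt ht.le
  rw [div_mul_div_comm, ← Real.exp_add, h1, div_div, div_pow, h2]
  congr 2
  field_simp
  ring

/-- A Gaussian bound by a product; it follows from `s²` and `h²` both being at most the quadratic
form in the exponent. -/
lemma phi2_le {t : ℝ} (ht : 0 < 1 - t^2) (x y : ℝ) :
    phi2 x y t ≤ 1 / (2 * π * √(1 - t^2)) * (Real.exp (-(1/4) * x^2) * Real.exp (-(1/4) * y^2)) := by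
  unfold phi2
  rw [← Real.exp_add, one_div, inv_mul_eq_div]
  gcongr
  rw [div_le_iff₀ (by positivity)]
  nlinarith [sq_nonneg (x - t * y), sq_nonneg (y - t * x)]

lemma phi2_continuous (t : ℝ) : Continuous (fun z : ℝ × ℝ => phi2 z.1 z.2 t) := by
  unfold phi2
  fun_prop

lemma fst_mul_phi2_integrable {t : ℝ} (ht : 0 < 1 - t^2) :
    Integrable (fun z : ℝ × ℝ => z.1 * phi2 z.1 z.2 t) (volume.prod volume) := by
  have h := ((integrable_mul_exp_neg_mul_sq (b := 1/4) (by norm_num)).mul_prod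
    (integrable_exp_neg_mul_sq (b := 1/4) (by norm_num))).const_mul (1 / (2 * π * √(1 - t^2)))
  refine h.mono (continuous_fst.mul (phi2_continuous t)).aestronglyMeasurable
    (Eventually.of_forall fun z => ?_)
  simp only [norm_mul, Real.norm_eq_abs, abs_of_pos (phi2_pos ht _ _), Real.abs_exp]
  rw [abs_of_nonneg (show 0 ≤ 1 / (2 * π * √(1 - t^2)) by positivity)]
  calc _ ≤ |z.1| * _ := mul_le_mul_of_nonneg_left (phi2_le ht _ _) (abs_nonneg _)
    _ = _ := by ring

lemma snd_mul_phi2_integrable {t : ℝ} (ht : 0 < 1 - t^2) :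
    Integrable (fun z : ℝ × ℝ => z.2 * phi2 z.1 z.2 t) (volume.prod volume) := by
  refine (fst_mul_phi2_integrable ht).swap.congr (Eventually.of_forall fun z => ?_)
  simp [phi2_symm z.1 z.2]

lemma phi2_tendsto {t : ℝ} (ht : 0 < 1 - t^2) (y : ℝ) :
    Tendsto (fun x => phi2 x y t) atTop (𝓝 0) := by
  have h : Tendsto (fun x : ℝ => Real.exp (-(1/4) * x^2)) atTop (𝓝 0) := by
    refine Real.tendsto_exp_atBot.comp ?_
    exact (tendsto_pow_atTop two_ne_zero).const_mul_atTop_of_neg (by norm_num)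
  have h2 := (h.mul_const (Real.exp (-(1/4) * y^2))).const_mul (1 / (2 * π * √(1 - t^2)))
  simp only [zero_mul, mul_zero] at h2
  exact squeeze_zero (fun x => (phi2_pos ht _ _).le) (fun x => phi2_le ht _ _) h2

lemma hasDerivAt_phi2_fst {t : ℝ} (ht : 0 < 1 - t^2) (x y : ℝ) :
    HasDerivAt (fun x => phi2 x y t) (-((x - t * y) / (1 - t^2) * phi2 x y t)) x := by
  have h : HasDerivAt (fun x : ℝ => -(x^2 - 2*t*x*y + y^2)/(2*(1-t^2)))
      (-((x - t * y) / (1 - t^2))) x := by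
    have := ((((hasDerivAt_id x).pow 2).sub (((hasDerivAt_id x).const_mul (2*t)).mul_const y)).add_const
      (y^2)).neg.div_const (2*(1-t^2))
    convert! this using 1
    simp
    field_simp
    ring
  have := h.exp.div_const (2*Real.pi*Real.sqrt (1-t^2))
  convert! this using 1
  unfold phi2
  ring

lemma phi2_integrable_fst {t : ℝ} (ht : 0 < 1 - t^2) (y : ℝ) :
    Integrable (fun x => phi2 x y t) := by
  have h := ((integrable_exp_neg_mul_sq (b := 1/4) (by norm_num)).mul_const
    (Real.exp (-(1/4) * y^2))).const_mul (1 / (2 * π * √(1 - t^2)))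
  refine h.mono' ((phi2_continuous t).comp (by fun_prop : Continuous fun x : ℝ => (x, y))).aestronglyMeasurable
    (Eventually.of_forall fun x => ?_)
  rw [Real.norm_eq_abs, abs_of_pos (phi2_pos ht _ _)]
  exact phi2_le ht _ _

lemma mul_phi2_integrable_fst {t : ℝ} (ht : 0 < 1 - t^2) (y : ℝ) :
    Integrable (fun x => x * phi2 x y t) := by
  have h := ((integrable_mul_exp_neg_mul_sq (b := 1/4) (by norm_num)).mul_const
    (Real.exp (-(1/4) * y^2))).const_mul (1 / (2 * π * √(1 - t^2)))
  refine h.mono (continuous_id.mul ((phi2_continuous t).comp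
      (by fun_prop : Continuous fun x : ℝ => (x, y)))).aestronglyMeasurable
    (Eventually.of_forall fun x => ?_)
  simp only [norm_mul, Real.norm_eq_abs, abs_of_pos (phi2_pos ht _ _), Real.abs_exp]
  rw [abs_of_nonneg (show 0 ≤ 1 / (2 * π * √(1 - t^2)) by positivity)]
  calc _ ≤ |x| * _ := mul_le_mul_of_nonneg_left (phi2_le ht _ _) (abs_nonneg _)
    _ = _ := by ring

lemma score_integrable {t : ℝ} (ht : 0 < 1 - t^2) (y : ℝ) :
    Integrable (fun x => (x - t * y) / (1 - t^2) * phi2 x y t) := by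
  have := ((mul_phi2_integrable_fst ht y).sub ((phi2_integrable_fst ht y).const_mul (t * y))).div_const
    (1 - t^2)
  refine this.congr (Eventually.of_forall fun x => ?_)
  simp only [Pi.sub_apply]
  ring

/-- The integrand is minus the derivative of the density in its first argument. -/
lemma integral_score {t : ℝ} (ht : 0 < 1 - t^2) (a y : ℝ) :
    ∫ x in Ioi a, (x - t * y) / (1 - t^2) * phi2 x y t = phi2 a y t := by
  have h := integral_Ioi_of_hasDerivAt_of_tendsto' (a := a)
    (fun x _ => hasDerivAt_phi2_fst ht x y) (score_integrable ht y).neg.integrableOn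
    (phi2_tendsto ht y)
  rw [integral_neg] at h
  linarith

/-- Integrating out the second coordinate over a tail, through the explicit antiderivative given
by the factorization `phi2_eq`. -/
lemma integral_phi2_snd {t : ℝ} (ht : 0 < 1 - t^2) (x b : ℝ) :
    ∫ y in Ioi b, phi2 x y t = phi x * PhiBar ((b - t * x) / √(1 - t^2)) := by
  have hs : 0 < √(1 - t^2) := Real.sqrt_pos.2 ht
  have hd : ∀ y ∈ Ici b, HasDerivAt (fun y => -(phi x * PhiBar ((y - t * x) / √(1 - t^2))))
      (phi2 x y t) y := by
    intro y _
    have h1 : HasDerivAt (fun y : ℝ => (y - t * x) / √(1 - t^2)) (1 / √(1 - t^2)) y :=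
      ((hasDerivAt_id y).sub_const _).div_const _
    have := (((hasDerivAt_phiBar _).comp y h1).const_mul (phi x)).neg
    convert! this using 1
    rw [phi2_eq ht]; ring
  have hl : Tendsto (fun y => -(phi x * PhiBar ((y - t * x) / √(1 - t^2)))) atTop (𝓝 0) := by
    have h1 : Tendsto (fun y : ℝ => (y - t * x) / √(1 - t^2)) atTop atTop :=
      (tendsto_atTop_add_const_right _ (-(t * x)) tendsto_id).atTop_div_const hs
    simpa using ((phiBar_tendsto.comp h1).const_mul (phi x)).neg
  have hi : IntegrableOn (fun y => phi2 x y t) (Ioi b) := by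
    simp_rw [phi2_symm x]
    exact (phi2_integrable_fst ht x).integrableOn
  rw [integral_Ioi_of_hasDerivAt_of_tendsto' hd hi hl]
  ring

/-- By `integral_phi2_snd` the function differentiated here is `∫ y in Ioi b, phi2 x y t`; its
derivative in the correlation is `-∂ₓ phi2 x b t`, the derivative computed in
`hasDerivAt_phi2_fst`. -/
lemma hasDerivAt_tail {t : ℝ} (ht : 0 < 1 - t^2) (x b : ℝ) :
    HasDerivAt (fun t => phi x * PhiBar ((b - t * x) / √(1 - t^2)))
      ((x - t * b) / (1 - t^2) * phi2 x b t) t := by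
  have hs : 0 < √(1 - t^2) := Real.sqrt_pos.2 ht
  have h0 : HasDerivAt (fun t : ℝ => 1 - t^2) (-(2 * t)) t := by
    simpa using ((hasDerivAt_id t).pow 2).const_sub 1
  have h1 := h0.sqrt ht.ne'
  have h2 : HasDerivAt (fun t : ℝ => b - t * x) (-x) t := by
    simpa using ((hasDerivAt_id t).mul_const x).const_sub b
  have h3 := ((hasDerivAt_phiBar _).comp t (h2.div h1 hs.ne')).const_mul (phi x)
  convert! h3 using 1
  rw [phi2_eq ht]
  have h4 : (√(1 - t^2))^2 = 1 - t^2 := Real.sq_sqrt ht.le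
  simp only [Pi.div_apply]
  generalize phi ((b - t * x) / √(1 - t^2)) = P
  rw [← h4]
  rw [← h4] at ht
  generalize hS : √(1 - t^2) = S at *
  simp only [Real.sqrt_sq hs.le]
  field_simp
  have h5 : S^2 = 1 - t^2 := h4
  linear_combination -(x * phi x * P) * h5

/-! ### The truncated bivariate normal law -/

/-- The weight on the left is the conditional mean of `Q`, with `c`, `d` the correlations of `Q`.
Times the density it equals `-(c ∂ₛ + d ∂ₕ) phi2`, so only boundary terms survive. -/
lemma integral_score_quadrant {t : ℝ} (ht : 0 < 1 - t^2) (c d a b : ℝ) :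
    ∫ s in Ioi a, ∫ h in Ioi b, ((c - t * d) * s + (d - t * c) * h) / (1 - t^2) * phi2 s h t =
      c * (phi a * PhiBar ((b - t * a) / √(1 - t^2))) +
      d * (phi b * PhiBar ((a - t * b) / √(1 - t^2))) := by
  set μ := (volume.restrict (Ioi a)).prod (volume.restrict (Ioi b)) with hμ
  have hle : μ ≤ volume.prod volume := by
    rw [hμ, Measure.prod_restrict]; exact Measure.restrict_le_self
  have h1 := (fst_mul_phi2_integrable ht).mono_measure hle
  have h2 := (snd_mul_phi2_integrable ht).mono_measure hle
  have i1 : Integrable (fun z : ℝ × ℝ => (z.1 - t * z.2) / (1 - t^2) * phi2 z.1 z.2 t) μ := by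
    refine ((h1.sub (h2.const_mul t)).div_const (1 - t^2)).congr (Eventually.of_forall fun z => ?_)
    simp only [Pi.sub_apply]
    ring
  have i2 : Integrable (fun z : ℝ × ℝ => (z.2 - t * z.1) / (1 - t^2) * phi2 z.1 z.2 t) μ := by
    refine ((h2.sub (h1.const_mul t)).div_const (1 - t^2)).congr (Eventually.of_forall fun z => ?_)
    simp only [Pi.sub_apply]
    ring
  have e1 : ∫ z, (z.1 - t * z.2) / (1 - t^2) * phi2 z.1 z.2 t ∂μ =
      phi a * PhiBar ((b - t * a) / √(1 - t^2)) := by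
    rw [integral_prod_symm _ i1]
    simp only [integral_score ht]
    exact integral_phi2_snd ht a b
  have e2 : ∫ z, (z.2 - t * z.1) / (1 - t^2) * phi2 z.1 z.2 t ∂μ =
      phi b * PhiBar ((a - t * b) / √(1 - t^2)) := by
    rw [integral_prod _ i2]
    have h3 : ∀ x, ∫ y in Ioi b, (y - t * x) / (1 - t^2) * phi2 x y t = phi2 b x t := fun x => by
      simp_rw [phi2_symm x]
      exact integral_score ht b x
    simp only [h3]
    exact integral_phi2_snd ht b a
  have hsum : ∀ z : ℝ × ℝ, ((c - t * d) * z.1 + (d - t * c) * z.2) / (1 - t^2) * phi2 z.1 z.2 t =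
      c * ((z.1 - t * z.2) / (1 - t^2) * phi2 z.1 z.2 t) +
      d * ((z.2 - t * z.1) / (1 - t^2) * phi2 z.1 z.2 t) := fun z => by ring
  rw [← e1, ← e2, ← integral_const_mul, ← integral_const_mul,
    ← integral_add (i1.const_mul c) (i2.const_mul d)]
  rw [← integral_congr_ae (Eventually.of_forall hsum), integral_prod]
  refine ((i1.const_mul c).add (i2.const_mul d)).congr (Eventually.of_forall fun z => ?_)
  exact (hsum z).symm

lemma phiBar2_eq {t : ℝ} (ht : 0 < 1 - t^2) (a b : ℝ) :
    PhiBar2 a b t = ∫ x in Ioi a, phi x * PhiBar ((b - t * x) / √(1 - t^2)) := by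
  unfold PhiBar2
  simp only [integral_phi2_snd ht]

lemma tail_integrable (t b : ℝ) :
    Integrable (fun x => phi x * PhiBar ((b - t * x) / √(1 - t^2))) := by
  refine (phi_integrable.mul_const (∫ t, phi t)).mono'
    (phi_continuous.mul (phiBar_continuous.comp (by fun_prop))).aestronglyMeasurable
    (Eventually.of_forall fun x => ?_)
  rw [Real.norm_eq_abs, abs_of_pos (mul_pos (phi_pos _) (phiBar_pos _))]
  exact mul_le_mul_of_nonneg_left (phiBar_le _) (phi_pos x).le

lemma phiBar2_pos {t : ℝ} (ht : 0 < 1 - t^2) (a b : ℝ) : 0 < PhiBar2 a b t := by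
  rw [phiBar2_eq ht]
  have hp : ∀ x, 0 < phi x * PhiBar ((b - t * x) / √(1 - t^2)) :=
    fun x => mul_pos (phi_pos _) (phiBar_pos _)
  rw [setIntegral_pos_iff_support_of_nonneg_ae
    (Eventually.of_forall fun x => (hp x).le) (tail_integrable t b).integrableOn]
  have : Function.support (fun x => phi x * PhiBar ((b - t * x) / √(1 - t^2))) = univ := by
    ext y; simp [(phi_pos y).ne', (phiBar_pos _).ne']
  simp [this]

lemma eventually_sq_lt {t : ℝ} (ht : 0 < 1 - t^2) : ∀ᶠ r in 𝓝 t, 0 < 1 - r^2 := by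
  have : Continuous fun r : ℝ => 1 - r^2 := by fun_prop
  exact this.continuousAt.eventually (lt_mem_nhds ht)

/-- Plackett's identity: the derivative of the joint survival function in the correlation is the
joint density. -/
lemma hasDerivAt_phiBar2 {t : ℝ} (ht : 0 < 1 - t^2) (a b : ℝ) :
    HasDerivAt (PhiBar2 a b) (phi2 a b t) t := by
  -- On the neighbourhood where `κ < 1 - r²` the derivative has an `r`-free integrable bound.
  set κ := (1 - t^2) / 2 with hκ
  have hκ0 : 0 < κ := by positivity
  have hs : {r : ℝ | κ < 1 - r^2} ∈ 𝓝 t := by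
    have : Continuous fun r : ℝ => 1 - r^2 := by fun_prop
    exact this.continuousAt.eventually (lt_mem_nhds (show κ < 1 - t^2 by linarith))
  have hb : ∀ x : ℝ, ∀ r ∈ {r : ℝ | κ < 1 - r^2},
      ‖(x - r * b) / (1 - r^2) * phi2 x b r‖ ≤ (|x * phi x| + |b| * phi x) / (κ * √κ) := by
    intro x r hr
    have hr' : κ < 1 - r^2 := hr
    have hr0 : 0 < 1 - r^2 := hκ0.trans hr'
    have hr1 : |r| ≤ 1 := by
      rw [← sq_le_one_iff_abs_le_one]; linarith
    rw [phi2_eq hr0, norm_mul, norm_div, norm_div, norm_mul]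
    simp only [Real.norm_eq_abs, abs_of_pos (phi_pos _), abs_of_pos hr0,
      abs_of_nonneg (Real.sqrt_nonneg _), abs_mul]
    rw [div_mul_div_comm]
    have hx : |x - r * b| ≤ |x| + |b| := by
      refine (abs_sub _ _).trans ?_
      rw [abs_mul]
      nlinarith [abs_nonneg b]
    have : 0 < √κ := Real.sqrt_pos.2 hκ0
    refine div_le_div₀ ?_ ?_ (by positivity) ?_
    · have := phi_pos x; positivity
    · have h1 : phi x * phi ((b - r * x) / √(1 - r^2)) ≤ phi x :=
        mul_le_of_le_one_right (phi_pos x).le (phi_le_one _)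
      calc _ ≤ (|x| + |b|) * phi x :=
            mul_le_mul hx h1 (mul_pos (phi_pos _) (phi_pos _)).le (by positivity)
        _ = _ := by ring
    · exact mul_le_mul hr'.le (Real.sqrt_le_sqrt hr'.le) this.le hr0.le
  have key := (hasDerivAt_integral_of_dominated_loc_of_deriv_le
    (μ := volume.restrict (Ioi a))
    (F := fun r x => phi x * PhiBar ((b - r * x) / √(1 - r^2)))
    (F' := fun r x => (x - r * b) / (1 - r^2) * phi2 x b r)
    (bound := fun x => (|x * phi x| + |b| * phi x) / (κ * √κ))
    hs (Eventually.of_forall fun r => (tail_integrable r b).integrableOn.aestronglyMeasurable)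
    (tail_integrable t b).integrableOn
    (score_integrable ht b).integrableOn.aestronglyMeasurable
    (Eventually.of_forall hb)
    ((mul_phi_integrable.abs.add (phi_integrable.const_mul |b|)).div_const _).integrableOn
    (Eventually.of_forall fun x r hr => hasDerivAt_tail (hκ0.trans hr) x b)).2
  rw [integral_score ht] at key
  refine key.congr_of_eventuallyEq ?_
  filter_upwards [eventually_sq_lt ht] with r hr
  exact phiBar2_eq hr a b

/-! ### The trivariate density -/

lemma covM_det (c d t : ℝ) :
    (covM c d t).det = (1 - t^2) * (1 - d^2) - (c - t * d)^2 := by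
  simp [covM, Matrix.det_fin_three]
  ring

/-- The exponent of the trivariate density, with the inverse covariance written through the
adjugate. -/
lemma covM_quadForm (c d t q s h : ℝ) :
    ![q, s, h] ⬝ᵥ ((covM c d t)⁻¹ *ᵥ ![q, s, h]) =
      ((1 - t^2) * q^2 + (1 - d^2) * s^2 + (1 - c^2) * h^2 + 2 * (t * d - c) * q * s
        + 2 * (t * c - d) * q * h + 2 * (c * d - t) * s * h) / (covM c d t).det := by
  rw [Matrix.inv_def, Ring.inverse_eq_inv', Matrix.smul_mulVec, dotProduct_smul, smul_eq_mul,
    inv_mul_eq_div]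
  congr 1
  simp [covM, Matrix.adjugate_fin_three_of, Matrix.mulVec, dotProduct, Fin.sum_univ_three]
  ring

/-- The joint density is that of `(Q^S, Q^H)` times the conditional normal density of `Q`, which
has affine mean and constant variance. -/
lemma pdf3_eq {c d t : ℝ} (ht : 0 < 1 - t^2) (hD : 0 < (covM c d t).det) (q s h : ℝ) :
    pdf3 c d t ![q, s, h] = phi2 s h t *
      gaussianPDFReal (((c - t * d) * s + (d - t * c) * h) / (1 - t^2))
        ((covM c d t).det / (1 - t^2)).toNNReal q := by
  have hv : 0 < (covM c d t).det / (1 - t^2) := div_pos hD ht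
  rw [gaussianPDFReal_def, Real.coe_toNNReal _ hv.le]
  unfold pdf3 phi2
  rw [covM_quadForm]
  have h1 : √((2 * π)^3 * (covM c d t).det) =
      2 * π * √(1 - t^2) * √(2 * π * ((covM c d t).det / (1 - t^2))) := by
    rw [mul_assoc (2 * π), ← Real.sqrt_mul ht.le,
      show (2 * π)^3 * (covM c d t).det = (2 * π)^2 * ((1 - t^2) * (2 * π * ((covM c d t).det / (1 - t^2)))) by
        field_simp]
    rw [Real.sqrt_mul (by positivity), Real.sqrt_sq (by positivity)]
  rw [h1]
  beta_reduce
  rw [inv_mul_eq_div, div_mul_div_comm, ← Real.exp_add]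
  congr 2
  have hD' := covM_det c d t
  field_simp
  rw [hD']
  ring

lemma pdf3_pos {c d t : ℝ} (hD : 0 < (covM c d t).det) (v : Fin 3 → ℝ) : 0 < pdf3 c d t v := by
  unfold pdf3; positivity

/-- The other two principal `2 × 2` minors are positive as well, by the symmetry of the
determinant formula. -/
lemma det_pos_imp {c d t : ℝ} (ht : 0 < 1 - t^2) (hD : 0 < (covM c d t).det) :
    0 < 1 - c^2 ∧ 0 < 1 - d^2 := by
  have h1 := covM_det c d t
  have h2 : (covM c d t).det = (1 - t^2) * (1 - c^2) - (d - t * c)^2 := by rw [h1]; ring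
  constructor
  · have : 0 < (1 - t^2) * (1 - c^2) := by nlinarith [sq_nonneg (d - t * c)]
    exact (mul_pos_iff_of_pos_left ht).1 this
  · have : 0 < (1 - t^2) * (1 - d^2) := by nlinarith [sq_nonneg (c - t * d)]
    exact (mul_pos_iff_of_pos_left ht).1 this

/-- A `2 × 2` quadratic form with nonnegative determinant and positive leading coefficient is
nonnegative. -/
lemma quad_nonneg {a b e x y : ℝ} (ha : 0 < a) (hab : 0 ≤ a * e - b^2) :
    0 ≤ a * x^2 + 2 * b * x * y + e * y^2 := by
  have h : 0 ≤ a * (a * x^2 + 2 * b * x * y + e * y^2) := by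
    have : a * (a * x^2 + 2 * b * x * y + e * y^2) = (a * x + b * y)^2 + (a * e - b^2) * y^2 := by
      ring
    rw [this]
    positivity
  exact nonneg_of_mul_nonneg_right h ha

/-- With unit variances each squared coordinate is at most the Mahalanobis form, because the
remainder is the form of the residuals after regressing on that coordinate. Averaging the three
inequalities gives a product Gaussian bound. -/
lemma pdf3_le {c d t : ℝ} (ht : 0 < 1 - t^2) (hD : 0 < (covM c d t).det) (q s h : ℝ) :
    pdf3 c d t ![q, s, h] ≤ 1 / √((2 * π)^3 * (covM c d t).det) *
      (Real.exp (-(1/6) * q^2) * (Real.exp (-(1/6) * s^2) * Real.exp (-(1/6) * h^2))) := by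
  obtain ⟨hc, hd⟩ := det_pos_imp ht hD
  unfold pdf3
  rw [covM_quadForm, ← Real.exp_add, ← Real.exp_add, one_div, inv_mul_eq_div]
  gcongr
  set Q := (1 - t^2) * q^2 + (1 - d^2) * s^2 + (1 - c^2) * h^2 + 2 * (t * d - c) * q * s
        + 2 * (t * c - d) * q * h + 2 * (c * d - t) * s * h with hQ
  have hD' := covM_det c d t
  have hq : q^2 ≤ Q / (covM c d t).det := by
    rw [le_div_iff₀ hD]
    have := quad_nonneg (a := 1 - d^2) (b := c * d - t) (e := 1 - c^2) (x := s - c * q)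
      (y := h - d * q) hd (by rw [hD'] at hD; nlinarith)
    rw [hD', hQ]; nlinarith
  have hs : s^2 ≤ Q / (covM c d t).det := by
    rw [le_div_iff₀ hD]
    have := quad_nonneg (a := 1 - t^2) (b := t * c - d) (e := 1 - c^2) (x := q - c * s)
      (y := h - t * s) ht (by rw [hD'] at hD; nlinarith)
    rw [hD', hQ]; nlinarith
  have hh : h^2 ≤ Q / (covM c d t).det := by
    rw [le_div_iff₀ hD]
    have := quad_nonneg (a := 1 - t^2) (b := t * d - c) (e := 1 - d^2) (x := q - d * h)
      (y := s - t * h) ht (by rw [hD'] at hD; nlinarith)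
    rw [hD', hQ]; nlinarith
  linarith

lemma pdf3_continuous (c d t : ℝ) :
    Continuous (fun z : ℝ × ℝ × ℝ => pdf3 c d t ![z.1, z.2.1, z.2.2]) := by
  simp only [pdf3, covM_quadForm]
  fun_prop

lemma pdf3_integrable {c d t : ℝ} (ht : 0 < 1 - t^2) (hD : 0 < (covM c d t).det) :
    Integrable (fun z : ℝ × ℝ × ℝ => pdf3 c d t ![z.1, z.2.1, z.2.2])
      (volume.prod (volume.prod volume)) := by
  have g := integrable_exp_neg_mul_sq (b := 1/6) (by norm_num)
  refine ((g.mul_prod (g.mul_prod g)).const_mul (1 / √((2 * π)^3 * (covM c d t).det))).mono'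
    (pdf3_continuous c d t).aestronglyMeasurable (Eventually.of_forall fun z => ?_)
  rw [Real.norm_eq_abs, abs_of_pos (pdf3_pos hD _)]
  exact pdf3_le ht hD _ _ _

lemma mul_pdf3_integrable {c d t : ℝ} (ht : 0 < 1 - t^2) (hD : 0 < (covM c d t).det) :
    Integrable (fun z : ℝ × ℝ × ℝ => z.1 * pdf3 c d t ![z.1, z.2.1, z.2.2])
      (volume.prod (volume.prod volume)) := by
  have g := integrable_exp_neg_mul_sq (b := 1/6) (by norm_num)
  have g' := integrable_mul_exp_neg_mul_sq (b := 1/6) (by norm_num)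
  refine ((g'.mul_prod (g.mul_prod g)).const_mul (1 / √((2 * π)^3 * (covM c d t).det))).mono
    (continuous_fst.mul (pdf3_continuous c d t)).aestronglyMeasurable
    (Eventually.of_forall fun z => ?_)
  simp only [norm_mul, Real.norm_eq_abs, abs_of_pos (pdf3_pos hD _), Real.abs_exp]
  rw [abs_of_nonneg (show 0 ≤ 1 / √((2 * π)^3 * (covM c d t).det) by positivity)]
  calc _ ≤ |z.1| * _ := mul_le_mul_of_nonneg_left (pdf3_le ht hD _ _ _) (abs_nonneg _)
    _ = _ := by ring

/-- Fubini on `ℝ × (Ioi a × Ioi b)`, moving the first integration innermost. -/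
lemma integral_quadrant_swap (f : ℝ × ℝ × ℝ → ℝ)
    (hf : Integrable f (volume.prod (volume.prod volume))) (a b : ℝ) :
    ∫ q, ∫ s in Ioi a, ∫ h in Ioi b, f (q, s, h) =
      ∫ s in Ioi a, ∫ h in Ioi b, ∫ q, f (q, s, h) := by
  set μ := (volume.restrict (Ioi a)).prod (volume.restrict (Ioi b)) with hμ
  have hle : (volume : Measure ℝ).prod μ ≤ volume.prod (volume.prod volume) := by
    rw [hμ, Measure.prod_restrict]
    nth_rw 1 [← Measure.restrict_univ (μ := (volume : Measure ℝ))]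
    rw [Measure.prod_restrict]
    exact Measure.restrict_le_self
  have hf' := hf.mono_measure hle
  calc _ = ∫ q, ∫ z, f (q, z) ∂μ := by
        refine integral_congr_ae ?_
        filter_upwards [hf'.prod_right_ae] with q hq
        exact (integral_prod _ hq).symm
    _ = ∫ z, (∫ q : ℝ, f (q, z)) ∂μ := integral_integral_swap (f := fun q z => f (q, z)) hf'
    _ = _ := integral_prod _ hf'.integral_prod_right

lemma integral_pdf3 {c d t : ℝ} (ht : 0 < 1 - t^2) (hD : 0 < (covM c d t).det) (a b : ℝ) :
    ∫ q : ℝ, ∫ s in Ioi a, ∫ h in Ioi b, pdf3 c d t ![q, s, h] = PhiBar2 a b t := by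
  rw [integral_quadrant_swap _ (pdf3_integrable ht hD)]
  have hv : ((covM c d t).det / (1 - t^2)).toNNReal ≠ 0 :=
    (Real.toNNReal_pos.2 (div_pos hD ht)).ne'
  simp only [pdf3_eq ht hD, integral_const_mul, integral_gaussianPDFReal_eq_one _ hv, mul_one]
  rfl

/-- The truncated first moment, reduced to boundary terms by integrating the score. -/
lemma integral_mul_pdf3 {c d t : ℝ} (ht : 0 < 1 - t^2) (hD : 0 < (covM c d t).det) (a b : ℝ) :
    ∫ q : ℝ, ∫ s in Ioi a, ∫ h in Ioi b, q * pdf3 c d t ![q, s, h] =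
      c * (phi a * PhiBar ((b - t * a) / √(1 - t^2))) +
      d * (phi b * PhiBar ((a - t * b) / √(1 - t^2))) := by
  rw [integral_quadrant_swap _ (mul_pdf3_integrable ht hD), ← integral_score_quadrant ht]
  have hv : ((covM c d t).det / (1 - t^2)).toNNReal ≠ 0 :=
    (Real.toNNReal_pos.2 (div_pos hD ht)).ne'
  have hm : ∀ m : ℝ, ∫ q, q * gaussianPDFReal m ((covM c d t).det / (1 - t^2)).toNNReal q = m := by
    intro m
    have h1 := integral_gaussianReal_eq_integral_smul (μ := m) (f := fun q : ℝ => q) hv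
    rw [integral_id_gaussianReal] at h1
    simp only [smul_eq_mul] at h1
    exact (integral_congr_ae (Eventually.of_forall fun q => mul_comm _ _)).trans h1.symm
  simp only [pdf3_eq ht hD, mul_left_comm _ (phi2 _ _ t), integral_const_mul, hm]
  simp only [mul_comm (phi2 _ _ t)]

/-! ### The derivative of the expected quality -/

/-- derivative of the expected quality of hires with respect to θ. -/
theorem deriv_expected_hire_quality (θS θH θ τS τH : ℝ)
    (hθ : θ ∈ Set.Ioo (-1 : ℝ) 1) (hpd : (covM θS θH θ).PosDef) :
    HasDerivAt
      (fun t => (∫ q : ℝ, ∫ s in Set.Ioi τS, ∫ h in Set.Ioi τH,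
                    q * pdf3 θS θH t ![q, s, h]) /
                (∫ q : ℝ, ∫ s in Set.Ioi τS, ∫ h in Set.Ioi τH,
                    pdf3 θS θH t ![q, s, h]))
      (phi2 τS τH θ / PhiBar2 τS τH θ *
        (((θS - θ*θH) * τS + (θH - θ*θS) * τH) / (1 - θ^2) -
          (∫ q : ℝ, ∫ s in Set.Ioi τS, ∫ h in Set.Ioi τH,
              q * pdf3 θS θH θ ![q, s, h]) /
          (∫ q : ℝ, ∫ s in Set.Ioi τS, ∫ h in Set.Ioi τH,
              pdf3 θS θH θ ![q, s, h])))
      θ := by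
  have ht : 0 < 1 - θ^2 := by nlinarith [hθ.1, hθ.2]
  have hD : 0 < (covM θS θH θ).det := hpd.det_pos
  have hev : ∀ᶠ t in 𝓝 θ, 0 < (covM θS θH t).det := by
    have : Continuous fun t : ℝ => (covM θS θH t).det := by
      simp only [covM_det]; fun_prop
    exact this.continuousAt.eventually (lt_mem_nhds hD)
  have hN := ((hasDerivAt_tail ht τS τH).const_mul θS).add
    ((hasDerivAt_tail ht τH τS).const_mul θH)
  have hP := (phiBar2_pos ht τS τH).ne'
  have key := (hN.div (hasDerivAt_phiBar2 ht τS τH) hP).congr_of_eventuallyEq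
    (f₁ := fun t => (∫ q : ℝ, ∫ s in Set.Ioi τS, ∫ h in Set.Ioi τH,
                    q * pdf3 θS θH t ![q, s, h]) /
                (∫ q : ℝ, ∫ s in Set.Ioi τS, ∫ h in Set.Ioi τH,
                    pdf3 θS θH t ![q, s, h])) (by
      filter_upwards [hev, eventually_sq_lt ht] with t h1 h2
      rw [integral_mul_pdf3 h2 h1, integral_pdf3 h2 h1]
      rfl)
  convert! key using 1
  rw [integral_mul_pdf3 ht hD, integral_pdf3 ht hD, phi2_symm τH τS]
  simp only [Pi.add_apply]
  field_simp
  ring
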